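/- arXiv:1502.02743 — 2 statements merged into one kernel-verified Lean document; each statement's English description precedes it below -/
import Mathlib

section
/- For Re(a) > 0, n a nonnegative integer and 0 ≤ 2n < Re(s): ∫₀^∞ t^{2n} sin(s·arctan(t/a)) / ((a² + t²)^{s/2} (e^{2πt} − 1)) dt = (−1)^n (2n)!/(2Γ(s)) ∫₀^∞ e^{−aw} w^{s−2n−1} L_{2n}^{s−2n−1}(aw) (1/(e^w − 1) + 1/2 − 1/w) dw. -/
open Real Complex MeasureTheory Set Finset

/-- Generalized (associated) Laguerre polynomial with complex parameter. -/
noncomputable def laguerre (n : ℕ) (k x : ℂ) : ℂ :=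
  ∑ j ∈ Finset.range (n + 1),
    (-1) ^ j * Complex.Gamma (n + k + 1) /
      (Complex.Gamma (k + j + 1) * (Nat.factorial (n - j) : ℂ) * (Nat.factorial j : ℂ)) * x ^ j

/-!
For `0 < re c` and `0 < re r` the Gamma integral `∫ w ^ (c - 1) * exp (-r * w) = Γ(c) / r ^ c`
follows from the case of real `r` by analytic continuation. Summing it over the terms of the
Laguerre polynomial and using the binomial theorem gives
`∫ exp (-r * w) * w ^ k * L_n^k (a * w) = Γ(n + k + 1) / n! * (r - a) ^ n / r ^ (n + k + 1)`.
Taking the difference of its values at `r = a ± i t` shows that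
`t ^ (2 * n) * sin (s * arctan (t / a)) / (a ^ 2 + t ^ 2) ^ (s / 2)` is, up to a constant, the sine
transform of `exp (-a * w) * w ^ (s - 2 * n - 1) * L_{2n}^{s - 2n - 1} (a * w)`. Integrate it
against `1 / (exp (2 * π * t) - 1)` and interchange the integrals: expanding this kernel into a
geometric series, the inner integral becomes `∑ w / ((2 * π * k) ^ 2 + w ^ 2)`, which the
Mittag-Leffler expansion of the cotangent at an imaginary argument identifies as
`(1 / (exp w - 1) + 1 / 2 - 1 / w) / 2`.
-/

theorem integrableOn_mul_exp_neg_of_le_re {f : ℝ → ℂ} {x : ℝ} {r : ℂ}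
    (hf : IntegrableOn (fun w : ℝ ↦ f w * Complex.exp (-(x * w))) (Ioi 0)) (hr : x ≤ r.re) :
    IntegrableOn (fun w : ℝ ↦ f w * Complex.exp (-(r * w))) (Ioi 0) := by
  have hbound : ∀ᵐ w : ℝ ∂volume.restrict (Ioi 0), ‖Complex.exp (-((r - x) * w))‖ ≤ 1 := by
    filter_upwards [ae_restrict_mem measurableSet_Ioi] with w hw
    rw [Complex.norm_exp, Real.exp_le_one_iff]
    simpa using mul_nonneg (sub_nonneg.mpr hr) hw.le
  refine (Integrable.bdd_mul hf (by fun_prop) hbound).congr (.of_forall fun w ↦ ?_)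
  simp only
  rw [mul_left_comm, ← Complex.exp_add]
  ring_nf

theorem norm_mul_exp_neg_le {δ w : ℝ} (hδ : 0 < δ) (hw : 0 < w) (z : ℂ) :
    ‖(w : ℂ) * Complex.exp (-(z * w))‖ ≤ δ⁻¹ * Real.exp (-((z.re - δ) * w)) := by
  have hexp : δ * w ≤ Real.exp (δ * w) := by linarith [Real.add_one_le_exp (δ * w)]
  calc ‖(w : ℂ) * Complex.exp (-(z * w))‖
      = δ⁻¹ * (δ * w * Real.exp (-(z.re * w))) := by
        rw [norm_mul, Complex.norm_exp, Complex.norm_of_nonneg hw.le]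
        simp [field]
    _ ≤ δ⁻¹ * (Real.exp (δ * w) * Real.exp (-(z.re * w))) := by gcongr
    _ = δ⁻¹ * Real.exp (-((z.re - δ) * w)) := by rw [← Real.exp_add]; ring_nf

theorem differentiableOn_integral_mul_exp_neg {f : ℝ → ℂ} {σ : ℝ}
    (hf : ∀ x : ℝ, σ < x → IntegrableOn (fun w : ℝ ↦ f w * Complex.exp (-(x * w))) (Ioi 0)) :
    DifferentiableOn ℂ (fun r : ℂ ↦ ∫ w in Ioi (0 : ℝ), f w * Complex.exp (-(r * w)))
      {r | σ < r.re} := by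
  intro r (hr : σ < r.re)
  have hint : ∀ z : ℂ, σ < z.re →
      IntegrableOn (fun w : ℝ ↦ f w * Complex.exp (-(z * w))) (Ioi 0) :=
    fun z hz ↦ integrableOn_mul_exp_neg_of_le_re (hf z.re hz) le_rfl
  have hnhds : ∀ x < r.re, {z : ℂ | x < z.re} ∈ nhds r := fun x hx ↦
    (isOpen_lt continuous_const Complex.continuous_re).mem_nhds hx
  obtain ⟨δ, hδ, hσδ⟩ : ∃ δ > 0, σ + 3 * δ = r.re := ⟨(r.re - σ) / 3, by linarith, by ring⟩
  refine (hasDerivAt_integral_of_dominated_loc_of_deriv_le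
    (F := fun (z : ℂ) (w : ℝ) ↦ f w * Complex.exp (-(z * w)))
    (F' := fun (z : ℂ) (w : ℝ) ↦ f w * (Complex.exp (-(z * w)) * -w))
    (s := {z | σ + 2 * δ < z.re})
    (bound := fun w ↦ δ⁻¹ * ‖f w * Complex.exp (-((σ + δ : ℝ) * w))‖)
    (hnhds _ (by linarith)) ?_ (hint r hr) ?_ ?_ ?_ ?_).2.differentiableAt.differentiableWithinAt
  · filter_upwards [hnhds σ hr] with z hz using (hint z hz).aestronglyMeasurable
  · have hmeas := (hint r hr).aestronglyMeasurable.mul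
      (by fun_prop : Continuous fun w : ℝ ↦ -(w : ℂ)).aestronglyMeasurable
    exact hmeas.congr (.of_forall fun w ↦ mul_assoc _ _ _)
  · filter_upwards [ae_restrict_mem measurableSet_Ioi] with w hw z hz
    calc ‖f w * (Complex.exp (-(z * w)) * -w)‖
        = ‖f w‖ * ‖(w : ℂ) * Complex.exp (-(z * w))‖ := by
          rw [norm_mul, mul_neg, norm_neg, mul_comm (Complex.exp _)]
      _ ≤ ‖f w‖ * (δ⁻¹ * Real.exp (-((z.re - δ) * w))) := by
          gcongr; exact norm_mul_exp_neg_le hδ hw z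
      _ ≤ ‖f w‖ * (δ⁻¹ * Real.exp (-((σ + δ) * w))) := by
          have hre : σ + δ ≤ z.re - δ := by linarith [mem_ofPred.mp hz]
          have hw' : 0 ≤ w := hw.le
          gcongr
      _ = δ⁻¹ * ‖f w * Complex.exp (-((σ + δ : ℝ) * w))‖ := by
          rw [norm_mul, Complex.norm_exp, mul_left_comm]
          simp
  · exact (hf _ (by linarith)).norm.const_mul _
  · refine .of_forall fun w z _ ↦ HasDerivAt.const_mul _ (HasDerivAt.cexp ?_)
    simpa using ((hasDerivAt_id' z).mul_const (w : ℂ)).fun_neg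

theorem eqOn_re_pos_of_eq_ofReal {f g : ℂ → ℂ} (hf : DifferentiableOn ℂ f {z | 0 < z.re})
    (hg : DifferentiableOn ℂ g {z | 0 < z.re}) (hfg : ∀ x : ℝ, 0 < x → f x = g x) :
    EqOn f g {z | 0 < z.re} := by
  have hopen : IsOpen {z : ℂ | 0 < z.re} := isOpen_lt continuous_const Complex.continuous_re
  refine (hf.analyticOnNhd hopen).eqOn_of_preconnected_of_frequently_eq (hg.analyticOnNhd hopen)
    (convex_halfSpace_re_gt 0).isPreconnected (z₀ := 1) (by simp) ?_
  have htendsto : Filter.Tendsto ((↑) : ℝ → ℂ) (nhdsWithin 1 {1}ᶜ) (nhdsWithin 1 {1}ᶜ) :=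
    Complex.ofReal_one ▸ Complex.continuous_ofReal.continuousWithinAt.tendsto_nhdsWithin
      fun x hx ↦ by simpa using hx
  refine htendsto.frequently (Filter.Eventually.frequently ?_)
  filter_upwards [nhdsWithin_le_nhds (lt_mem_nhds zero_lt_one)] with x hx using hfg x hx

theorem integrableOn_cpow_mul_exp_neg_mul {c r : ℂ} (hc : 0 < c.re) (hr : 0 < r.re) :
    IntegrableOn (fun w : ℝ ↦ (w : ℂ) ^ (c - 1) * Complex.exp (-(r * w))) (Ioi 0) := by
  have hdom := integrableOn_rpow_mul_exp_neg_mul_rpow (s := c.re - 1) (by linarith) one_pos hr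
  refine hdom.mono' (ContinuousOn.aestronglyMeasurable (fun w hw ↦ ?_) measurableSet_Ioi) ?_
  · exact ((Complex.continuousAt_ofReal_cpow_const _ _ (.inr (ne_of_gt hw))).mul
      (by fun_prop)).continuousWithinAt
  · filter_upwards [ae_restrict_mem measurableSet_Ioi] with w hw
    rw [norm_mul, Complex.norm_cpow_eq_rpow_re_of_pos hw, Complex.norm_exp]
    simp

theorem integral_cpow_mul_exp_neg_mul_of_re_pos {c r : ℂ} (hc : 0 < c.re) (hr : 0 < r.re) :
    ∫ w in Ioi (0 : ℝ), (w : ℂ) ^ (c - 1) * Complex.exp (-(r * w)) = Complex.Gamma c / r ^ c := by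
  have hlaplace := differentiableOn_integral_mul_exp_neg (f := fun w ↦ (w : ℂ) ^ (c - 1)) (σ := 0)
    fun x hx ↦ integrableOn_cpow_mul_exp_neg_mul hc (by simpa using hx)
  have hcpow : DifferentiableOn ℂ (fun z : ℂ ↦ Complex.Gamma c / z ^ c) {z | 0 < z.re} := by
    intro z (hz : 0 < z.re)
    refine (((differentiableAt_id.cpow_const (.inl hz)).fun_inv ?_).const_mul
      _).differentiableWithinAt
    exact Complex.cpow_ne_zero_iff.mpr (.inl (ne_zero_of_re_pos hz))
  refine eqOn_re_pos_of_eq_ofReal hlaplace hcpow (fun x hx ↦ ?_) hr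
  rw [Complex.integral_cpow_mul_exp_neg_mul_Ioi hc hx, one_div, Complex.inv_cpow _ _ ?_,
    inv_mul_eq_div]
  rw [Complex.arg_ofReal_of_nonneg hx.le]
  exact Real.pi_ne_zero.symm

theorem exp_mul_cpow_mul_laguerre_mul (n : ℕ) (c k a r : ℂ) {w : ℝ} (hw : 0 < w) :
    Complex.exp (-(r * w)) * (w : ℂ) ^ (c - 1) * laguerre n k (a * w) =
      ∑ j ∈ Finset.range (n + 1), (-1) ^ j * Complex.Gamma (n + k + 1) /
        (Complex.Gamma (k + j + 1) * (n - j).factorial * j.factorial) * a ^ j *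
          ((w : ℂ) ^ (c + j - 1) * Complex.exp (-(r * w))) := by
  rw [laguerre, Finset.mul_sum]
  refine Finset.sum_congr rfl fun j _ ↦ ?_
  rw [add_sub_right_comm, Complex.cpow_add _ _ (Complex.ofReal_ne_zero.mpr hw.ne'),
    Complex.cpow_natCast, mul_pow]
  ring

theorem integrableOn_exp_mul_cpow_mul_laguerre (n : ℕ) {c r : ℂ} (k a : ℂ) (hc : 0 < c.re)
    (hr : 0 < r.re) :
    IntegrableOn (fun w : ℝ ↦ Complex.exp (-(r * w)) * (w : ℂ) ^ (c - 1) * laguerre n k (a * w))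
      (Ioi 0) := by
  have hre (j : ℕ) : 0 < (c + j).re := by
    rw [Complex.add_re, Complex.natCast_re]
    positivity
  refine IntegrableOn.congr_fun (integrable_finsetSum _ fun j _ ↦ ?_)
    (fun w hw ↦ (exp_mul_cpow_mul_laguerre_mul n c k a r hw).symm) measurableSet_Ioi
  exact (integrableOn_cpow_mul_exp_neg_mul (hre j) hr).const_mul _

theorem integrableOn_exp_mul_cpow_mul_laguerre_mul_self (n : ℕ) {c r : ℂ} (k a : ℂ)
    (hc : 0 < c.re) (hr : 0 < r.re) :
    IntegrableOn
      (fun w : ℝ ↦ Complex.exp (-(r * w)) * (w : ℂ) ^ (c - 1) * laguerre n k (a * w) * w)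
      (Ioi 0) := by
  have hc' : 0 < (c + 1).re := by simpa using add_pos hc one_pos
  refine (integrableOn_exp_mul_cpow_mul_laguerre n k a hc' hr).congr_fun (fun w hw ↦ ?_)
    measurableSet_Ioi
  have hpow : (w : ℂ) ^ (c + 1 - 1) = w ^ (c - 1) * w := by
    rw [add_sub_right_comm, Complex.cpow_add _ _ (Complex.ofReal_ne_zero.mpr (ne_of_gt hw)),
      Complex.cpow_one]
  simp only [hpow]
  ring

theorem laguerre_coeff_mul_integral {n j : ℕ} (hj : j ≤ n) {k r : ℂ} (a : ℂ) (hk : -1 < k.re)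
    (hr : 0 < r.re) :
    (-1) ^ j * Complex.Gamma (n + k + 1) /
        (Complex.Gamma (k + j + 1) * (n - j).factorial * j.factorial) * a ^ j *
          (Complex.Gamma (k + 1 + j) / r ^ (k + 1 + j)) =
      Complex.Gamma (n + k + 1) / (n.factorial * r ^ (n + k + 1)) *
        ((-a) ^ j * r ^ (n - j) * n.choose j) := by
  have hr0 : r ≠ 0 := Complex.ne_zero_of_re_pos hr
  have hGamma : Complex.Gamma (k + j + 1) ≠ 0 := by
    refine Complex.Gamma_ne_zero_of_re_pos ?_
    simp only [Complex.add_re, Complex.natCast_re, Complex.one_re]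
    linarith [(Nat.cast_nonneg j : (0 : ℝ) ≤ j)]
  have hpow : r ^ (n + k + 1) = r ^ (k + j + 1) * r ^ (n - j) := by
    rw [← Complex.cpow_natCast, ← Complex.cpow_add _ _ hr0, Nat.cast_sub hj]
    ring_nf
  have hcpow : r ^ (k + j + 1) ≠ 0 := Complex.cpow_ne_zero_iff.mpr (.inl hr0)
  rw [hpow, Nat.cast_choose ℂ hj, neg_pow a, add_right_comm k 1]
  field_simp [Nat.factorial_ne_zero]

theorem integral_exp_mul_cpow_mul_laguerre (n : ℕ) {k r : ℂ} (a : ℂ) (hk : -1 < k.re)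
    (hr : 0 < r.re) :
    ∫ w in Ioi (0 : ℝ), Complex.exp (-(r * w)) * (w : ℂ) ^ k * laguerre n k (a * w) =
      Complex.Gamma (n + k + 1) / n.factorial * ((r - a) ^ n / r ^ (n + k + 1)) := by
  have hre (j : ℕ) : 0 < (k + 1 + j).re := by
    simp only [Complex.add_re, Complex.natCast_re, Complex.one_re]
    linarith [(Nat.cast_nonneg j : (0 : ℝ) ≤ j)]
  have hexpand (w : ℝ) (hw : 0 < w) := exp_mul_cpow_mul_laguerre_mul n (k + 1) k a r hw
  simp only [add_sub_cancel_right] at hexpand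
  rw [setIntegral_congr_fun measurableSet_Ioi hexpand, integral_finsetSum _ fun j _ ↦
    (integrableOn_cpow_mul_exp_neg_mul (hre j) hr).const_mul _]
  simp_rw [integral_const_mul]
  rw [sub_eq_neg_add r a, add_pow, div_mul_div_comm, mul_div_right_comm, Finset.mul_sum]
  refine Finset.sum_congr rfl fun j hj ↦ ?_
  rw [integral_cpow_mul_exp_neg_mul_of_re_pos (hre j) hr]
  exact laguerre_coeff_mul_integral (Finset.mem_range_succ_iff.mp hj) a hk hr

theorem log_mul_of_re_pos {x y : ℂ} (hx : 0 < x.re) (hy : 0 < y.re) :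
    Complex.log (x * y) = Complex.log x + Complex.log y := by
  have hargx := abs_lt.mp (abs_arg_lt_pi_div_two_iff.mpr (.inl hx))
  have hargy := abs_lt.mp (abs_arg_lt_pi_div_two_iff.mpr (.inl hy))
  exact Complex.log_mul (Complex.ne_zero_of_re_pos hx) (Complex.ne_zero_of_re_pos hy)
    ⟨by linarith, by linarith⟩

theorem log_div_of_re_pos {x y : ℂ} (hx : 0 < x.re) (hy : 0 < y.re) :
    Complex.log (x / y) = Complex.log x - Complex.log y := by
  have hinv : 0 < y⁻¹.re := by
    rw [Complex.inv_re]
    exact div_pos hy (Complex.normSq_pos.mpr (Complex.ne_zero_of_re_pos hy))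
  have hargy := abs_lt.mp (abs_arg_lt_pi_div_two_iff.mpr (.inl hy))
  rw [div_eq_mul_inv, log_mul_of_re_pos hx hinv, Complex.log_inv _ (by linarith), sub_eq_add_neg]

theorem sq_add_sq_eq_add_mul_I_mul_sub_mul_I (x y : ℂ) :
    x ^ 2 + y ^ 2 = (x + y * I) * (x - y * I) := by
  linear_combination y ^ 2 * I_sq

theorem arctan_ofReal_div {a : ℂ} (ha : 0 < a.re) (t : ℝ) :
    Complex.arctan (t / a) =
      -I / 2 * (Complex.log (a + t * I) - Complex.log (a - t * I)) := by
  have ha0 : a ≠ 0 := Complex.ne_zero_of_re_pos ha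
  rw [Complex.arctan, ← log_div_of_re_pos (by simpa using ha) (by simpa using ha)]
  congr 2
  field_simp

theorem arctan_neg_ofReal_div {a : ℂ} (ha : 0 < a.re) (t : ℝ) :
    Complex.arctan ((-t : ℝ) / a) = -Complex.arctan (t / a) := by
  rw [arctan_ofReal_div ha, arctan_ofReal_div ha, Complex.ofReal_neg, neg_mul, sub_neg_eq_add,
    ← sub_eq_add_neg]
  ring

theorem log_add_mul_I {a : ℂ} (ha : 0 < a.re) (t : ℝ) :
    Complex.log (a + t * I) = Complex.log (a ^ 2 + t ^ 2) / 2 + Complex.arctan (t / a) * I := by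
  rw [arctan_ofReal_div ha, sq_add_sq_eq_add_mul_I_mul_sub_mul_I,
    log_mul_of_re_pos (by simpa using ha) (by simpa using ha)]
  linear_combination (Complex.log (a + t * I) - Complex.log (a - t * I)) / 2 * I_sq

theorem add_mul_I_cpow {a : ℂ} (ha : 0 < a.re) (t : ℝ) (s : ℂ) :
    (a + t * I) ^ s =
      (a ^ 2 + t ^ 2) ^ (s / 2) * Complex.exp (s * Complex.arctan (t / a) * I) := by
  have hadd : 0 < (a + t * I).re := by simpa using ha
  have hsub : 0 < (a - t * I).re := by simpa using ha
  have hsq : a ^ 2 + (t : ℂ) ^ 2 ≠ 0 := by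
    rw [sq_add_sq_eq_add_mul_I_mul_sub_mul_I]
    exact mul_ne_zero (Complex.ne_zero_of_re_pos hadd) (Complex.ne_zero_of_re_pos hsub)
  rw [Complex.cpow_def_of_ne_zero (Complex.ne_zero_of_re_pos hadd),
    Complex.cpow_def_of_ne_zero hsq, ← Complex.exp_add, log_add_mul_I ha]
  ring_nf

theorem integral_exp_mul_cpow_mul_laguerre_add_mul_I (n : ℕ) {a s : ℂ} (ha : 0 < a.re)
    (hs : (2 * n : ℝ) < s.re) (t : ℝ) :
    ∫ w in Ioi (0 : ℝ), Complex.exp (-((a + t * I) * w)) * (w : ℂ) ^ (s - 2 * n - 1) *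
        laguerre (2 * n) (s - 2 * n - 1) (a * w) =
      (-1) ^ n * Complex.Gamma s / (2 * n).factorial *
        (t ^ (2 * n) / (a ^ 2 + t ^ 2) ^ (s / 2)) *
          Complex.exp (-(s * Complex.arctan (t / a) * I)) := by
  have hk : -1 < (s - 2 * n - 1).re := by simpa using hs
  have hr : 0 < (a + t * I).re := by simpa using ha
  have hexponent : ((2 * n : ℕ) : ℂ) + (s - 2 * n - 1) + 1 = s := by push_cast; ring
  rw [integral_exp_mul_cpow_mul_laguerre _ a hk hr, hexponent, add_sub_cancel_left, mul_pow,
    pow_mul I, I_sq, add_mul_I_cpow ha, Complex.exp_neg]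
  ring

theorem integral_exp_mul_cpow_mul_laguerre_mul_sin (n : ℕ) {a s : ℂ} (ha : 0 < a.re)
    (hs : (2 * n : ℝ) < s.re) (t : ℝ) :
    ∫ w in Ioi (0 : ℝ), Complex.exp (-(a * w)) * (w : ℂ) ^ (s - 2 * n - 1) *
        laguerre (2 * n) (s - 2 * n - 1) (a * w) * (Real.sin (t * w) : ℂ) =
      (-1) ^ n * Complex.Gamma s / (2 * n).factorial *
        (t ^ (2 * n) * Complex.sin (s * Complex.arctan (t / a)) /
          (a ^ 2 + t ^ 2) ^ (s / 2)) := by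
  have hsplit (w : ℝ) : Complex.exp (-(a * w)) * (w : ℂ) ^ (s - 2 * n - 1) *
        laguerre (2 * n) (s - 2 * n - 1) (a * w) * (Real.sin (t * w) : ℂ) =
      Complex.exp (-((a + t * I) * w)) * (w : ℂ) ^ (s - 2 * n - 1) *
        laguerre (2 * n) (s - 2 * n - 1) (a * w) * (I / 2) -
      Complex.exp (-((a + (-t : ℝ) * I) * w)) * (w : ℂ) ^ (s - 2 * n - 1) *
        laguerre (2 * n) (s - 2 * n - 1) (a * w) * (I / 2) := by
    rw [show -((a + t * I) * w) = -(a * w) + -(t * w) * I by ring,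
      show -((a + (-t : ℝ) * I) * w) = -(a * w) + t * w * I by push_cast; ring,
      Complex.exp_add, Complex.exp_add, Complex.ofReal_sin, Complex.sin, Complex.ofReal_mul]
    ring
  have hint (u : ℝ) : IntegrableOn (fun w : ℝ ↦ Complex.exp (-((a + u * I) * w)) *
      (w : ℂ) ^ (s - 2 * n - 1) * laguerre (2 * n) (s - 2 * n - 1) (a * w) * (I / 2)) (Ioi 0) :=
    (integrableOn_exp_mul_cpow_mul_laguerre _ _ _ (by simpa using hs) (by simpa using ha)).mul_const
      _
  simp_rw [hsplit]
  rw [integral_sub (hint t) (hint (-t)), integral_mul_const, integral_mul_const,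
    integral_exp_mul_cpow_mul_laguerre_add_mul_I n ha hs,
    integral_exp_mul_cpow_mul_laguerre_add_mul_I n ha hs, arctan_neg_ofReal_div ha, Complex.sin,
    Complex.ofReal_neg, neg_sq, (even_two_mul n).neg_pow]
  ring_nf

theorem integrableOn_sin_mul_exp_neg_mul {b : ℝ} (hb : 0 < b) (w : ℝ) :
    IntegrableOn (fun t : ℝ ↦ Real.sin (t * w) * Real.exp (-(b * t))) (Ioi 0) := by
  refine Integrable.bdd_mul (c := 1) ?_ (by fun_prop) (.of_forall fun t ↦ Real.abs_sin_le_one _)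
  simpa only [IntegrableOn, neg_mul] using integrableOn_exp_mul_Ioi (neg_lt_zero.mpr hb) 0

theorem integral_sin_mul_exp_neg_mul {b : ℝ} (hb : 0 < b) (w : ℝ) :
    ∫ t in Ioi (0 : ℝ), Real.sin (t * w) * Real.exp (-(b * t)) = w / (b ^ 2 + w ^ 2) := by
  have hre : (-b + w * I : ℂ).re < 0 := by simpa using hb
  have him (t : ℝ) : Real.sin (t * w) * Real.exp (-(b * t)) =
      RCLike.im (Complex.exp ((-b + w * I) * t)) := by
    simp [Complex.exp_im, mul_comm]
  simp_rw [him]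
  rw [integral_im (integrableOn_exp_mul_complex_Ioi hre 0), integral_exp_mul_complex_Ioi hre]
  simp [Complex.normSq_apply, ← sq, neg_div]

theorem integral_norm_sin_mul_exp_neg_mul_le {b : ℝ} (hb : 0 < b) (w : ℝ) :
    ∫ t in Ioi (0 : ℝ), ‖Real.sin (t * w) * Real.exp (-(b * t))‖ ≤ |w| / b ^ 2 := by
  have hint :
      IntegrableOn (fun t : ℝ ↦ |w| * (t ^ ((2 : ℝ) - 1) * Real.exp (-(b * t)))) (Ioi 0) := by
    have := integrableOn_rpow_mul_exp_neg_mul_rpow (s := 2 - 1) (by norm_num) one_pos hb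
    simpa only [IntegrableOn, Real.rpow_one, neg_mul] using this.const_mul |w|
  calc ∫ t in Ioi (0 : ℝ), ‖Real.sin (t * w) * Real.exp (-(b * t))‖
      ≤ ∫ t in Ioi (0 : ℝ), |w| * (t ^ ((2 : ℝ) - 1) * Real.exp (-(b * t))) := by
        refine setIntegral_mono_on (integrableOn_sin_mul_exp_neg_mul hb w).norm hint
          measurableSet_Ioi fun t ht ↦ ?_
        have hsin : |Real.sin (t * w)| ≤ |w| * t := by
          simpa [abs_mul, abs_of_pos (mem_Ioi.mp ht), mul_comm] using
            Real.abs_sin_le_abs (x := t * w)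
        rw [norm_mul, Real.norm_eq_abs, Real.norm_of_nonneg (Real.exp_nonneg _),
          show (2 : ℝ) - 1 = 1 by norm_num, Real.rpow_one, ← mul_assoc]
        gcongr
    _ = |w| / b ^ 2 := by
        rw [integral_const_mul, Real.integral_rpow_mul_exp_neg_mul_Ioi two_pos hb, Real.Gamma_two,
          Real.rpow_two, one_div_pow, mul_one, mul_one_div]

theorem hasSum_exp_neg_mul {x : ℝ} (hx : 0 < x) :
    HasSum (fun k : ℕ ↦ Real.exp (-((k + 1) * x))) (1 / (Real.exp x - 1)) := by
  have hgeom := (hasSum_geometric_of_lt_one (Real.exp_nonneg (-x))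
    (Real.exp_lt_one_iff.mpr (neg_lt_zero.mpr hx))).mul_left (Real.exp (-x))
  have hne : Real.exp x - 1 ≠ 0 := (sub_pos.mpr (Real.one_lt_exp_iff.mpr hx)).ne'
  convert! hgeom using 1
  · ext k
    rw [← Real.exp_nat_mul, ← Real.exp_add]
    ring_nf
  · rw [Real.exp_neg]
    field_simp

theorem cot_neg_half_mul_I {w : ℝ} (hw : w ≠ 0) :
    Complex.cot (-(w / 2) * I) = I * (1 + 2 / (Real.exp w - 1)) := by
  have hexponent : 2 * I * (-(w / 2) * I) = (w : ℂ) := by linear_combination -(w : ℂ) * I_sq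
  have hne : Complex.exp w - 1 ≠ 0 := by
    rw [← Complex.ofReal_exp, ← Complex.ofReal_one, ← Complex.ofReal_sub]
    exact Complex.ofReal_ne_zero.mpr (sub_ne_zero.mpr (Real.exp_eq_one_iff w |>.not.mpr hw))
  rw [Complex.cot_eq_exp_ratio, hexponent, Complex.ofReal_exp,
    div_eq_iff (mul_ne_zero I_ne_zero (sub_ne_zero.mpr (sub_ne_zero.mp hne).symm))]
  field_simp
  linear_combination (Complex.exp w + 1) * (Complex.exp w - 1) * I_sq

theorem mem_integerComplement_of_im_ne_zero {z : ℂ} (hz : z.im ≠ 0) :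
    z ∈ Complex.integerComplement := by
  rintro ⟨m, rfl⟩
  exact hz (Complex.intCast_im m)

theorem im_neg_div_two_pi_mul_I (w : ℝ) : (-(w / (2 * π)) * I : ℂ).im = -(w / (2 * π)) := by
  rw [Complex.mul_I_im]
  norm_cast

theorem one_div_sub_add_one_div_add_ofReal {w : ℝ} (hw : w ≠ 0) (y : ℝ) :
    1 / (-(w / (2 * π)) * I - y) + 1 / (-(w / (2 * π)) * I + y) =
      4 * π * I * (w / ((2 * π * y) ^ 2 + w ^ 2)) := by
  have hπ : (π : ℂ) ≠ 0 := Complex.ofReal_ne_zero.mpr Real.pi_ne_zero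
  have hne (u : ℝ) : -(w / (2 * π)) * I + u ≠ 0 := fun h ↦ by
    have him := congrArg Complex.im h
    rw [Complex.add_im, im_neg_div_two_pi_mul_I, Complex.ofReal_im, add_zero, Complex.zero_im,
      neg_eq_zero] at him
    exact div_ne_zero hw Real.two_pi_pos.ne' him
  have hadd := hne y
  have hsub : -(w / (2 * π)) * I - y ≠ 0 := by simpa [sub_eq_add_neg] using hne (-y)
  have hden : ((2 * π * y) ^ 2 + w ^ 2 : ℂ) =
      -(4 * π ^ 2) * ((-(w / (2 * π)) * I - y) * (-(w / (2 * π)) * I + y)) := by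
    field_simp
    linear_combination 4 * (w : ℂ) ^ 2 * I_sq
  rw [hden, div_add_div _ _ hsub hadd]
  field_simp
  ring

theorem tsum_div_sq_add_sq {w : ℝ} (hw : w ≠ 0) :
    ∑' k : ℕ, w / ((2 * π * (k + 1)) ^ 2 + w ^ 2) =
      1 / 2 * (1 / (Real.exp w - 1) + 1 / 2 - 1 / w) := by
  set x : ℂ := -(w / (2 * π)) * I with hx
  have hπ : (π : ℂ) ≠ 0 := Complex.ofReal_ne_zero.mpr Real.pi_ne_zero
  have hw' : (w : ℂ) ≠ 0 := Complex.ofReal_ne_zero.mpr hw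
  have hxc : x ∈ Complex.integerComplement := by
    refine mem_integerComplement_of_im_ne_zero ?_
    rw [hx, im_neg_div_two_pi_mul_I]
    exact neg_ne_zero.mpr (div_ne_zero hw Real.two_pi_pos.ne')
  have hterm (k : ℕ) : 1 / (x - (k + 1)) + 1 / (x + (k + 1)) =
      4 * π * I * (w / ((2 * π * (k + 1)) ^ 2 + w ^ 2) : ℝ) := by
    simpa [hx] using one_div_sub_add_one_div_add_ofReal hw (k + 1)
  have harg : π * x = -(w / 2) * I := by rw [hx]; field_simp
  have hinv : 1 / x = 2 * π * I / w := by
    rw [hx]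
    field_simp
    exact I_sq.symm
  have hcot : (4 * π * I) * ((∑' k : ℕ, w / ((2 * π * (k + 1)) ^ 2 + w ^ 2) : ℝ) : ℂ) =
      (4 * π * I) * (1 / 2 * (1 / (Real.exp w - 1) + 1 / 2 - 1 / w) : ℝ) := by
    rw [Complex.ofReal_tsum, ← tsum_mul_left, ← tsum_congr hterm, ← cot_series_rep' hxc,
      harg, hinv, cot_neg_half_mul_I hw]
    push_cast
    ring
  exact Complex.ofReal_injective (mul_left_cancel₀ (by simp [hπ]) hcot)

theorem integral_sin_div_exp_two_pi_sub_one {w : ℝ} (hw : w ≠ 0) :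
    ∫ t in Ioi (0 : ℝ), Real.sin (t * w) / (Real.exp (2 * π * t) - 1) =
      1 / 2 * (1 / (Real.exp w - 1) + 1 / 2 - 1 / w) := by
  have hb (k : ℕ) : 0 < 2 * π * (k + 1) := by positivity
  have hsummable : Summable fun k : ℕ ↦
      ∫ t in Ioi (0 : ℝ), ‖Real.sin (t * w) * Real.exp (-(2 * π * (k + 1) * t))‖ := by
    have hsq : Summable fun k : ℕ ↦ |w| / (2 * π) ^ 2 * (1 / ((k + 1 : ℕ) : ℝ) ^ 2) :=
      ((summable_nat_add_iff 1).mpr (Real.summable_one_div_nat_pow.mpr one_lt_two)).mul_left _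
    refine hsq.of_nonneg_of_le (fun k ↦ integral_nonneg fun t ↦ norm_nonneg _) fun k ↦
      (integral_norm_sin_mul_exp_neg_mul_le (hb k) w).trans_eq ?_
    push_cast
    field_simp
  have hexpand (t : ℝ) (ht : 0 < t) : ∑' k : ℕ,
      Real.sin (t * w) * Real.exp (-(2 * π * (k + 1) * t)) =
        Real.sin (t * w) / (Real.exp (2 * π * t) - 1) := by
    rw [div_eq_mul_one_div, ← (hasSum_exp_neg_mul (by positivity : 0 < 2 * π * t)).tsum_eq,
      ← tsum_mul_left]
    ring_nf
  calc ∫ t in Ioi (0 : ℝ), Real.sin (t * w) / (Real.exp (2 * π * t) - 1)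
      = ∫ t in Ioi (0 : ℝ), ∑' k : ℕ, Real.sin (t * w) * Real.exp (-(2 * π * (k + 1) * t)) :=
        (setIntegral_congr_fun measurableSet_Ioi hexpand).symm
    _ = ∑' k : ℕ, ∫ t in Ioi (0 : ℝ), Real.sin (t * w) * Real.exp (-(2 * π * (k + 1) * t)) :=
        (hasSum_integral_of_summable_integral_norm
          (fun k ↦ integrableOn_sin_mul_exp_neg_mul (hb k) w) hsummable).tsum_eq.symm
    _ = ∑' k : ℕ, w / ((2 * π * (k + 1)) ^ 2 + w ^ 2) := by
        simp_rw [fun k ↦ integral_sin_mul_exp_neg_mul (hb k) w]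
    _ = 1 / 2 * (1 / (Real.exp w - 1) + 1 / 2 - 1 / w) := tsum_div_sq_add_sq hw

theorem integrableOn_div_exp_mul_sub_one {c : ℝ} (hc : 0 < c) :
    IntegrableOn (fun t : ℝ ↦ t / (Real.exp (c * t) - 1)) (Ioi 0) := by
  refine ((integrableOn_exp_mul_Ioi (a := -(c / 2)) (by linarith) 0).const_mul c⁻¹).mono'
    (by fun_prop : Measurable fun t : ℝ ↦ t / (Real.exp (c * t) - 1)).aestronglyMeasurable ?_
  filter_upwards [ae_restrict_mem measurableSet_Ioi] with t (ht : 0 < t)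
  have hden : 0 < Real.exp (c * t) - 1 := sub_pos.mpr (Real.one_lt_exp_iff.mpr (by positivity))
  have hsinh : c * t / 2 ≤ Real.sinh (c * t / 2) := Real.self_le_sinh_iff.mpr (by positivity)
  have hfactor : Real.exp (-(c / 2) * t) * (Real.exp (c * t) - 1) = 2 * Real.sinh (c * t / 2) := by
    rw [Real.sinh_eq, mul_sub, ← Real.exp_add]
    ring_nf
  rw [Real.norm_of_nonneg (by positivity), div_le_iff₀ hden, mul_assoc, hfactor,
    inv_mul_eq_div, le_div_iff₀ hc]
  linarith

theorem integrable_mul_sin_div_exp_two_pi_sub_one {f : ℝ → ℂ}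
    (hf : IntegrableOn (fun w : ℝ ↦ f w * w) (Ioi 0)) :
    Integrable (Function.uncurry fun t w : ℝ ↦
      f w * (Real.sin (t * w) / (Real.exp (2 * π * t) - 1) : ℝ))
      ((volume.restrict (Ioi 0)).prod (volume.restrict (Ioi 0))) := by
  have hmeas : AEStronglyMeasurable f (volume.restrict (Ioi 0)) := by
    refine (hf.aestronglyMeasurable.mul
      (Complex.measurable_ofReal.inv.aestronglyMeasurable (f := fun w : ℝ ↦ (w : ℂ)⁻¹))).congr ?_
    filter_upwards [ae_restrict_mem measurableSet_Ioi] with w hw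
    exact mul_inv_cancel_right₀ (Complex.ofReal_ne_zero.mpr (ne_of_gt hw)) _
  have hkernel : Measurable fun z : ℝ × ℝ ↦
      ((Real.sin (z.1 * z.2) / (Real.exp (2 * π * z.1) - 1) : ℝ) : ℂ) := by fun_prop
  have hdom := Integrable.mul_prod
    (integrableOn_div_exp_mul_sub_one Real.two_pi_pos).ofReal hf (L := ℂ)
  refine hdom.mono (hmeas.comp_snd.mul hkernel.aestronglyMeasurable) (.of_forall fun ⟨t, w⟩ ↦ ?_)
  calc ‖f w * (Real.sin (t * w) / (Real.exp (2 * π * t) - 1) : ℝ)‖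
      = ‖f w‖ * (|Real.sin (t * w)| / |Real.exp (2 * π * t) - 1|) := by
        rw [norm_mul, Complex.norm_real, Real.norm_eq_abs, abs_div]
    _ ≤ ‖f w‖ * (|t * w| / |Real.exp (2 * π * t) - 1|) := by
        gcongr ‖f w‖ * (?_ / _); exact Real.abs_sin_le_abs
    _ = ‖((t / (Real.exp (2 * π * t) - 1) : ℝ) : ℂ) * (f w * w)‖ := by
        rw [norm_mul, norm_mul, Complex.norm_real, Complex.norm_real, Real.norm_eq_abs,
          Real.norm_eq_abs, abs_div, abs_mul]
        ring

theorem integral_sineTransform_div_exp_two_pi_sub_one {f : ℝ → ℂ}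
    (hf : IntegrableOn (fun w : ℝ ↦ f w * w) (Ioi 0)) :
    ∫ t in Ioi (0 : ℝ),
        (∫ w in Ioi (0 : ℝ), f w * (Real.sin (t * w) : ℂ)) / (Real.exp (2 * π * t) - 1 : ℝ) =
      1 / 2 * ∫ w in Ioi (0 : ℝ), f w * (1 / (Real.exp w - 1) + 1 / 2 - 1 / w : ℝ) := by
  calc ∫ t in Ioi (0 : ℝ),
        (∫ w in Ioi (0 : ℝ), f w * (Real.sin (t * w) : ℂ)) / (Real.exp (2 * π * t) - 1 : ℝ)
      = ∫ t in Ioi (0 : ℝ), ∫ w in Ioi (0 : ℝ),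
          f w * (Real.sin (t * w) / (Real.exp (2 * π * t) - 1) : ℝ) := by
        simp_rw [← integral_div, Complex.ofReal_div, mul_div_assoc]
    _ = ∫ w in Ioi (0 : ℝ), ∫ t in Ioi (0 : ℝ),
          f w * (Real.sin (t * w) / (Real.exp (2 * π * t) - 1) : ℝ) :=
        integral_integral_swap (integrable_mul_sin_div_exp_two_pi_sub_one hf)
    _ = ∫ w in Ioi (0 : ℝ), 1 / 2 * (f w * (1 / (Real.exp w - 1) + 1 / 2 - 1 / w : ℝ)) := by
        refine setIntegral_congr_fun measurableSet_Ioi fun w hw ↦ ?_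
        rw [integral_const_mul, integral_complex_ofReal,
          integral_sin_div_exp_two_pi_sub_one (ne_of_gt hw)]
        push_cast
        ring
    _ = 1 / 2 * ∫ w in Ioi (0 : ℝ), f w * (1 / (Real.exp w - 1) + 1 / 2 - 1 / w : ℝ) :=
        integral_const_mul _ _

theorem stmt_6_general (n : ℕ) (a : ℂ) (ha : 0 < a.re) (s : ℂ) (hs : (2 * n : ℝ) < s.re) :
    ∫ t in Ioi (0 : ℝ),
        (t : ℂ) ^ (2 * n) * Complex.sin (s * Complex.arctan (t / a)) /
          ((a ^ 2 + t ^ 2) ^ (s / 2) * ((Real.exp (2 * π * t) - 1 : ℝ) : ℂ)) =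
      (-1) ^ n * (Nat.factorial (2 * n) : ℂ) / (2 * Complex.Gamma s) *
        ∫ w in Ioi (0 : ℝ),
          Complex.exp (-a * w) * (w : ℂ) ^ (s - 2 * n - 1) *
            laguerre (2 * n) (s - 2 * n - 1) (a * w) *
            ((1 / (Real.exp w - 1) + 1 / 2 - 1 / w : ℝ) : ℂ) := by
  set f : ℝ → ℂ := fun w ↦ Complex.exp (-a * w) * (w : ℂ) ^ (s - 2 * n - 1) *
    laguerre (2 * n) (s - 2 * n - 1) (a * w)
  set C : ℂ := (-1) ^ n * Complex.Gamma s / (2 * n).factorial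
  have hΓ : Complex.Gamma s ≠ 0 :=
    Complex.Gamma_ne_zero_of_re_pos (lt_of_le_of_lt (by positivity) hs)
  have hfact : ((2 * n).factorial : ℂ) ≠ 0 := Nat.cast_ne_zero.mpr (Nat.factorial_ne_zero _)
  have hf : IntegrableOn (fun w : ℝ ↦ f w * w) (Ioi 0) := by
    simpa only [f, neg_mul] using integrableOn_exp_mul_cpow_mul_laguerre_mul_self (2 * n)
      (s - 2 * n - 1) a (by simpa using hs : 0 < (s - 2 * n).re) ha
  have hsine (t : ℝ) : ∫ w in Ioi (0 : ℝ), f w * (Real.sin (t * w) : ℂ) =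
      C * (t ^ (2 * n) * Complex.sin (s * Complex.arctan (t / a)) / (a ^ 2 + t ^ 2) ^ (s / 2)) := by
    simpa only [f, neg_mul] using integral_exp_mul_cpow_mul_laguerre_mul_sin n ha hs t
  have hfubini := integral_sineTransform_div_exp_two_pi_sub_one hf
  simp_rw [hsine, mul_div_assoc C, div_div, integral_const_mul] at hfubini
  have hC : C * ((-1) ^ n * (2 * n).factorial / (2 * Complex.Gamma s)) = 1 / 2 := by
    simp only [C]
    field_simp
    rw [← pow_mul, pow_mul', neg_one_sq, one_pow]
  have hC0 : C ≠ 0 := left_ne_zero_of_mul (hC.trans_ne (by norm_num))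
  refine mul_left_cancel₀ hC0 (hfubini.trans ?_)
  rw [← mul_assoc, hC]

theorem stmt_6 (n : ℕ) (a : ℝ) (ha : 0 < a) (s : ℂ) (hs : (2 * n : ℝ) < s.re) :
    ∫ t in Ioi (0 : ℝ),
        (t : ℂ) ^ (2 * n) * Complex.sin (s * (Real.arctan (t / a) : ℂ)) /
          (((a ^ 2 + t ^ 2 : ℝ) : ℂ) ^ (s / 2) * ((Real.exp (2 * π * t) - 1 : ℝ) : ℂ)) =
      (-1) ^ n * (Nat.factorial (2 * n) : ℂ) / (2 * Complex.Gamma s) *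
        ∫ w in Ioi (0 : ℝ),
          Complex.exp (-(a : ℂ) * w) * (w : ℂ) ^ (s - 2 * n - 1) *
            laguerre (2 * n) (s - 2 * n - 1) ((a : ℂ) * w) *
            ((1 / (Real.exp w - 1) + 1 / 2 - 1 / w : ℝ) : ℂ) := by
  simpa only [Complex.ofReal_arctan, Complex.ofReal_div, Complex.ofReal_add, Complex.ofReal_pow]
    using stmt_6_general n a (by simpa using ha) s hs
end

section
/- For w > 0 and β > 0, ∫₀^∞ sin(wt)/(e^{βt} + 1) dt = 1/(2w) − π/(2β sinh(πw/β)). -/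
open Real MeasureTheory Set

/-! For `t > 0`, expand `1 / (exp (β t) + 1)` as the alternating geometric series
`∑ (-1)ⁿ exp (-(n + 1) β t)`. Its partial sums stay bounded by `2 exp (-β t)`, so dominated
convergence allows termwise integration, and the Laplace transform of the sine gives
`∑ (-1)ⁿ w / (((n + 1) β)² + w²)`. This is the Mittag-Leffler expansion of the cosecant at
`i w / β`, which follows from that of the cotangent by `csc x = cot (x / 2) - cot x`. -/

open Filter Topology

section GeometricSeries

lemma abs_geom_sum_neg_le_two {r : ℝ} (hr₀ : 0 ≤ r) (hr₁ : r ≤ 1) (N : ℕ) :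
    |∑ n ∈ Finset.range N, (-r) ^ n| ≤ 2 := by
  have hnum : |(-r) ^ N - 1| ≤ 2 := by
    have hpow : |(-r) ^ N| ≤ 1 := by
      rw [abs_pow, abs_neg, abs_of_nonneg hr₀]
      exact pow_le_one₀ hr₀ hr₁
    calc |(-r) ^ N - 1| ≤ |(-r) ^ N| + |1| := abs_sub _ _
      _ ≤ 2 := by rw [abs_one]; linarith
  have hden : 1 ≤ |-r - 1| := by rw [abs_of_nonpos (by linarith)]; linarith
  rw [geom_sum_eq (by linarith), abs_div]
  exact (div_le_self (abs_nonneg _) hden).trans hnum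

variable {α E : Type*} [MeasurableSpace α] {μ : Measure α} [NormedAddCommGroup E] [NormedSpace ℝ E]

-- The norms need not be summable; dominated convergence is applied to the partial sums.
theorem tendsto_sum_integral_neg_pow_smul {r : α → ℝ} {g : α → E}
    (hr : AEStronglyMeasurable r μ) (hr₀ : ∀ᵐ a ∂μ, 0 ≤ r a) (hr₁ : ∀ᵐ a ∂μ, r a < 1)
    (hg : Integrable g μ) :
    Tendsto (fun N ↦ ∑ n ∈ Finset.range N, ∫ a, (-r a) ^ n • g a ∂μ) atTop
      (𝓝 (∫ a, (1 + r a)⁻¹ • g a ∂μ)) := by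
  have hterm (n : ℕ) : Integrable (fun a ↦ (-r a) ^ n • g a) μ := by
    refine hg.bdd_smul 1 (hr.neg.pow n) ?_
    filter_upwards [hr₀, hr₁] with a h₀ h₁
    rw [norm_pow, norm_neg, norm_of_nonneg h₀]
    exact pow_le_one₀ h₀ h₁.le
  simp only [← integral_finsetSum _ fun n _ ↦ hterm n]
  refine tendsto_integral_of_dominated_convergence (fun a ↦ 2 * ‖g a‖)
    (fun N ↦ (integrable_finsetSum _ fun n _ ↦ hterm n).aestronglyMeasurable)
    (hg.norm.const_mul 2) (fun N ↦ ?_) ?_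
  · filter_upwards [hr₀, hr₁] with a h₀ h₁
    rw [← Finset.sum_smul, norm_smul]
    gcongr
    exact abs_geom_sum_neg_le_two h₀ h₁.le N
  · filter_upwards [hr₀, hr₁] with a h₀ h₁
    simp only [← Finset.sum_smul]
    have hgeom := hasSum_geometric_of_abs_lt_one (r := -r a) (by rwa [abs_neg, abs_of_nonneg h₀])
    rw [sub_neg_eq_add] at hgeom
    exact hgeom.tendsto_sum_nat.smul_const (g a)

theorem tendsto_sum_integral_exp_smul_inv_exp_add_one_smul {β : ℝ} (hβ : 0 < β) {f : ℝ → E}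
    (hf : IntegrableOn (fun t ↦ Real.exp (-(β * t)) • f t) (Ioi 0)) :
    Tendsto
      (fun N ↦ ∑ n ∈ Finset.range N,
        (-1 : ℝ) ^ n • ∫ t in Ioi (0 : ℝ), Real.exp (-((n + 1) * β * t)) • f t)
      atTop (𝓝 (∫ t in Ioi (0 : ℝ), (Real.exp (β * t) + 1)⁻¹ • f t)) := by
  have hlim := tendsto_sum_integral_neg_pow_smul (r := fun t ↦ Real.exp (-(β * t)))
    (by fun_prop) (ae_of_all _ fun t ↦ (Real.exp_pos _).le)
    ((ae_restrict_mem measurableSet_Ioi).mono fun t ht ↦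
      Real.exp_lt_one_iff.2 (neg_neg_of_pos (mul_pos hβ ht))) hf
  have hterm (n : ℕ) (t : ℝ) : (-Real.exp (-(β * t))) ^ n • Real.exp (-(β * t)) • f t =
      (-1 : ℝ) ^ n • Real.exp (-((n + 1) * β * t)) • f t := by
    rw [smul_smul, smul_smul, neg_pow, mul_assoc, ← pow_succ, ← Real.exp_nat_mul]
    push_cast
    ring_nf
  have hsum (t : ℝ) : (1 + Real.exp (-(β * t)))⁻¹ • Real.exp (-(β * t)) • f t =
      (Real.exp (β * t) + 1)⁻¹ • f t := by
    rw [smul_smul, Real.exp_neg]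
    congr 1
    field_simp
  simpa only [hterm, hsum, integral_smul] using hlim

end GeometricSeries

section Laplace

variable {a w : ℂ}

lemma exp_neg_mul_mul_sin_eq (a w t : ℂ) :
    Complex.exp (-(a * t)) * Complex.sin (w * t) =
      (Complex.exp ((-a - w * Complex.I) * t) - Complex.exp ((-a + w * Complex.I) * t)) *
        (Complex.I / 2) := by
  rw [Complex.sin, show (-a - w * Complex.I) * t = -(a * t) + -(w * t) * Complex.I by ring,
    show (-a + w * Complex.I) * t = -(a * t) + w * t * Complex.I by ring, Complex.exp_add,
    Complex.exp_add]
  ring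

lemma re_neg_sub_mul_I_lt_zero (h : |w.im| < a.re) : (-a - w * Complex.I).re < 0 := by
  rw [Complex.sub_re, Complex.neg_re, Complex.mul_I_re]
  linarith [le_abs_self w.im]

lemma re_neg_add_mul_I_lt_zero (h : |w.im| < a.re) : (-a + w * Complex.I).re < 0 := by
  rw [Complex.add_re, Complex.neg_re, Complex.mul_I_re]
  linarith [neg_le_abs w.im]

lemma integrableOn_exp_neg_mul_mul_sin_Ioi (h : |w.im| < a.re) :
    IntegrableOn (fun t : ℝ ↦ Complex.exp (-(a * t)) * Complex.sin (w * t)) (Ioi 0) := by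
  simp only [exp_neg_mul_mul_sin_eq]
  exact ((integrableOn_exp_mul_complex_Ioi (re_neg_sub_mul_I_lt_zero h) 0).sub
    (integrableOn_exp_mul_complex_Ioi (re_neg_add_mul_I_lt_zero h) 0)).mul_const _

theorem integral_exp_neg_mul_mul_sin_Ioi (h : |w.im| < a.re) :
    ∫ t in Ioi (0 : ℝ), Complex.exp (-(a * t)) * Complex.sin (w * t) = w / (a ^ 2 + w ^ 2) := by
  have hre₁ := re_neg_sub_mul_I_lt_zero h
  have hre₂ := re_neg_add_mul_I_lt_zero h
  have hne₁ : -a - w * Complex.I ≠ 0 := fun h₀ ↦ by simp [h₀] at hre₁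
  have hne₂ : -a + w * Complex.I ≠ 0 := fun h₀ ↦ by simp [h₀] at hre₂
  have hfactor : a ^ 2 + w ^ 2 = (-a - w * Complex.I) * (-a + w * Complex.I) := by
    linear_combination w ^ 2 * Complex.I_sq
  simp only [exp_neg_mul_mul_sin_eq]
  rw [integral_mul_const, integral_sub (integrableOn_exp_mul_complex_Ioi hre₁ 0)
    (integrableOn_exp_mul_complex_Ioi hre₂ 0), integral_exp_mul_complex_Ioi hre₁,
    integral_exp_mul_complex_Ioi hre₂, hfactor]
  simp only [Complex.ofReal_zero, mul_zero, Complex.exp_zero]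
  field_simp
  linear_combination -2 * w * Complex.I_sq

end Laplace

section Cosecant

variable {z : ℂ}

lemma cot_sub_cot_two_mul (hz : Complex.sin (2 * z) ≠ 0) :
    Complex.cot z - Complex.cot (2 * z) = 1 / Complex.sin (2 * z) := by
  rw [Complex.sin_two_mul] at hz
  have hsin : Complex.sin z ≠ 0 := fun h ↦ hz (by simp [h])
  have hcos : Complex.cos z ≠ 0 := fun h ↦ hz (by simp [h])
  rw [Complex.cot_eq_cos_div_sin, Complex.cot_eq_cos_div_sin, Complex.sin_two_mul,
    Complex.cos_two_mul]
  field_simp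
  ring

lemma div_two_mem_integerComplement (hz : z ∈ Complex.integerComplement) :
    z / 2 ∈ Complex.integerComplement := by
  rintro ⟨n, hn⟩
  exact hz ⟨2 * n, by push_cast; rw [hn]; ring⟩

theorem hasSum_cotTerm (hz : z ∈ Complex.integerComplement) :
    HasSum (cotTerm z) (π * Complex.cot (π * z) - 1 / z) := by
  rw [cot_series_rep' hz]
  exact (summable_cotTerm hz).hasSum

lemma cotTerm_div_two (z : ℂ) (n : ℕ) : cotTerm (z / 2) n = 2 * cotTerm z (2 * n + 1) := by
  have hsub : z - ((2 * n + 1 : ℕ) + 1) = 2 * (z / 2 - (n + 1)) := by push_cast; ring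
  have hadd : z + ((2 * n + 1 : ℕ) + 1) = 2 * (z / 2 + (n + 1)) := by push_cast; ring
  rw [cotTerm, cotTerm, hsub, hadd]
  simp only [one_div, mul_inv]
  ring

theorem hasSum_neg_one_pow_mul_cotTerm (hz : z ∈ Complex.integerComplement) :
    HasSum (fun n : ℕ ↦ (-1) ^ (n + 1) * cotTerm z n) (π / Complex.sin (π * z) - 1 / z) := by
  have hodd : HasSum (fun n : ℕ ↦ (1 + (-1) ^ (n + 1)) * cotTerm z n)
      (0 + (π * Complex.cot (π * (z / 2)) - 1 / (z / 2))) := by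
    refine HasSum.even_add_odd ?_ ?_
    · simp [pow_succ, pow_mul, hasSum_zero]
    · convert hasSum_cotTerm (div_two_mem_integerComplement hz) using 2 with n
      rw [cotTerm_div_two, Even.neg_one_pow ⟨n + 1, by ring⟩]
      ring
  have hcsc := cot_sub_cot_two_mul (z := π * (z / 2))
    (by convert sin_pi_mul_ne_zero hz using 2; ring)
  rw [show 2 * (π * (z / 2)) = π * z by ring] at hcsc
  have hvalue : π / Complex.sin (π * z) - 1 / z =
      0 + (π * Complex.cot (π * (z / 2)) - 1 / (z / 2)) - (π * Complex.cot (π * z) - 1 / z) := by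
    rw [div_eq_mul_one_div (π : ℂ), ← hcsc]
    ring
  rw [hvalue]
  exact (hodd.sub (hasSum_cotTerm hz)).congr_fun fun n ↦ by ring

theorem hasSum_neg_one_pow_mul_div_sq_add_sq {y : ℂ}
    (hy : y * Complex.I ∈ Complex.integerComplement) :
    HasSum (fun n : ℕ ↦ (-1) ^ n * (y / ((n + 1) ^ 2 + y ^ 2)))
      (1 / (2 * y) - π / (2 * Complex.sinh (π * y))) := by
  have hterm (n : ℕ) : -Complex.I / 2 * ((-1) ^ (n + 1) * cotTerm (y * Complex.I) n) =
      (-1) ^ n * (y / ((n + 1) ^ 2 + y ^ 2)) := by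
    have hprod : (y * Complex.I + (n + 1)) * (y * Complex.I - (n + 1)) =
        -((n + 1) ^ 2 + y ^ 2) := by
      linear_combination y ^ 2 * Complex.I_sq
    rw [cotTerm_identity hy, hprod, one_div, inv_neg]
    linear_combination (-1) ^ (n + 1) * y * ((n + 1) ^ 2 + y ^ 2 : ℂ)⁻¹ * Complex.I_sq
  have hvalue : -Complex.I / 2 *
      (π / Complex.sin (π * (y * Complex.I)) - 1 / (y * Complex.I)) =
        1 / (2 * y) - π / (2 * Complex.sinh (π * y)) := by
    rw [← mul_assoc, Complex.sin_mul_I]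
    field_simp
    ring
  simpa only [hterm, hvalue] using (hasSum_neg_one_pow_mul_cotTerm hy).mul_left (-Complex.I / 2)

end Cosecant

lemma div_mul_I_mem_integerComplement {w : ℂ} {β : ℝ} (hw₀ : w ≠ 0) (hw : |w.im| < β) :
    w / β * Complex.I ∈ Complex.integerComplement := by
  have hβ : 0 < β := (abs_nonneg _).trans_lt hw
  have hβ₀ : (β : ℂ) ≠ 0 := Complex.ofReal_ne_zero.2 hβ.ne'
  rintro ⟨n, hn⟩
  have hw_eq : w = -((n * β : ℝ) * Complex.I) := by
    field_simp at hn
    push_cast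
    linear_combination w * Complex.I_sq + Complex.I * hn
  have hn_abs : |(n : ℝ)| < 1 := by
    rw [hw_eq, Complex.neg_im, Complex.im_ofReal_mul, Complex.I_im, mul_one, abs_neg, abs_mul,
      abs_of_pos hβ] at hw
    exact lt_of_mul_lt_mul_right (by rwa [one_mul]) hβ.le
  have hn₀ : n = 0 := Int.abs_lt_one_iff.1 (by exact_mod_cast hn_abs)
  exact hw₀ (by simp [hw_eq, hn₀])

theorem stmt_13_general {w : ℂ} {β : ℝ} (hw₀ : w ≠ 0) (hw : |w.im| < β) :
    ∫ t in Ioi (0 : ℝ), Complex.sin (w * t) / (Complex.exp (β * t) + 1) =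
      1 / (2 * w) - π / (2 * β * Complex.sinh (π * w / β)) := by
  have hβ : 0 < β := (abs_nonneg _).trans_lt hw
  have hβ₀ : (β : ℂ) ≠ 0 := Complex.ofReal_ne_zero.2 hβ.ne'
  have hterm (n : ℕ) :
      (-1 : ℝ) ^ n • ∫ t in Ioi (0 : ℝ), Real.exp (-((n + 1) * β * t)) • Complex.sin (w * t) =
        1 / β * ((-1) ^ n * (w / β / ((n + 1) ^ 2 + (w / β) ^ 2))) := by
    have hstrip : |w.im| < ((n + 1) * β : ℂ).re := by
      rw [Complex.re_mul_ofReal]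
      simpa using hw.trans_le (le_mul_of_one_le_left hβ.le (by simp))
    have hlaplace := integral_exp_neg_mul_mul_sin_Ioi hstrip
    simp only [Complex.real_smul]
    push_cast
    rw [hlaplace]
    field_simp
  have hintegral := tendsto_sum_integral_exp_smul_inv_exp_add_one_smul hβ
    (f := fun t ↦ Complex.sin (w * t))
    (by simpa using integrableOn_exp_neg_mul_mul_sin_Ioi (a := β) (by simpa using hw))
  have hseries := ((hasSum_neg_one_pow_mul_div_sq_add_sq
    (div_mul_I_mem_integerComplement hw₀ hw)).mul_left (1 / β : ℂ)).tendsto_sum_nat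
  simp only [hterm] at hintegral
  calc ∫ t in Ioi (0 : ℝ), Complex.sin (w * t) / (Complex.exp (β * t) + 1)
      = ∫ t in Ioi (0 : ℝ), (Real.exp (β * t) + 1)⁻¹ • Complex.sin (w * t) := by
        simp [div_eq_inv_mul]
    _ = 1 / β * (1 / (2 * (w / β)) - π / (2 * Complex.sinh (π * (w / β)))) :=
        tendsto_nhds_unique hintegral hseries
    _ = 1 / (2 * w) - π / (2 * β * Complex.sinh (π * w / β)) := by
        rw [← mul_div_assoc]
        field_simp

theorem stmt_13 (w β : ℝ) (hw : 0 < w) (hβ : 0 < β) :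
    ∫ t in Ioi (0 : ℝ), Real.sin (w * t) / (Real.exp (β * t) + 1) =
      1 / (2 * w) - π / (2 * β * Real.sinh (π * w / β)) := by
  rw [← Complex.ofReal_inj, ← integral_complex_ofReal]
  simpa using stmt_13_general (w := w) (Complex.ofReal_ne_zero.2 hw.ne') (by simpa using hβ)
end
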